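/- The graphs K₇, K₅ ∪ K₂, K₄ ∪ K₃, K₃ ∪ K₂ ∪ K₂, C₇, and C₅ ∪ K₂ are pairwise locally equienergetic: e(K₇) = e(K₅ ∪ K₂) = e(K₄ ∪ K₃) = e(K₃ ∪ K₂ ∪ K₂) = e(C₇) = e(C₅ ∪ K₂). -/

import Mathlib

open SimpleGraph Matrix Finset

noncomputable section

/-- The adjacency matrix of a simple graph over `ℝ` is Hermitian. -/
lemma adjMatrix_isHermitian {V : Type*} [Fintype V] (G : SimpleGraph V)
    [DecidableRel G.Adj] : (G.adjMatrix ℝ).IsHermitian := by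
  rw [Matrix.IsHermitian, Matrix.conjTranspose_eq_transpose_of_trivial]
  exact G.isSymm_adjMatrix

/-- The energy of a finite simple graph: the sum of the absolute values of the
eigenvalues of its adjacency matrix. -/
def graphEnergy {V : Type*} [Fintype V] [DecidableEq V] (G : SimpleGraph V) : ℝ :=
  letI := Classical.decRel G.Adj
  ∑ i, |(adjMatrix_isHermitian G).eigenvalues i|

/-- The local energy of `G` at a vertex `v`: the energy of `G` minus the energy of the
induced subgraph obtained by deleting `v`. -/
def localEnergyAt {V : Type*} [Fintype V] [DecidableEq V] (G : SimpleGraph V) (v : V) : ℝ :=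
  graphEnergy G - graphEnergy (G.induce {u | u ≠ v})

/-- The local energy of `G`: the sum of the local energies at all vertices. -/
def localEnergy {V : Type*} [Fintype V] [DecidableEq V] (G : SimpleGraph V) : ℝ :=
  ∑ v, localEnergyAt G v

end

/-!
Local energy is additive over disjoint unions, so it is enough to look at connected components, and
on each component that occurs here every vertex has local energy `2`.

The energy of `K_m` is `2 (m - 1)`, and deleting a vertex leaves `K_{m - 1}`. Deleting a vertex of
`C_n` leaves `P_{n - 1}`. The eigenvalues of `C_n` are `2 cos (2πj / n)` for `0 ≤ j < n`, those of
`P_{n - 1}` are `2 cos (πj / n)` for `0 < j < n`. Since `|cos (πj / n)|` depends only on `j` modulo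
`n`, and doubling permutes the residues modulo an odd `n`, the two energies differ by the term
`j = 0`, which is `2`. Hence the local energy of each of the six graphs is twice its order, `14`.
-/

theorem sum_range_mul_of_periodic {M : Type*} [AddCommMonoid M] {f : ℕ → M} {n c : ℕ}
    (hf : Function.Periodic f n) (hc : c.Coprime n) :
    ∑ j ∈ range n, f (c * j) = ∑ j ∈ range n, f j := by
  have hmaps : Set.MapsTo (fun j => c * j % n) (range n) (range n) := by
    intro j hj
    rw [coe_range, Set.mem_Iio] at hj ⊢
    exact Nat.mod_lt _ (by lia)
  have hinj : Set.InjOn (fun j => c * j % n) (range n) := by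
    intro i hi j hj hij
    exact (Nat.ModEq.cancel_left_of_coprime hc.symm hij).eq_of_lt_of_lt (mem_range.1 hi)
      (mem_range.1 hj)
  exact sum_nbij _ hmaps hinj (surjOn_of_injOn_of_card_le _ hmaps hinj le_rfl)
    fun _ _ => (hf.map_mod_nat _).symm

section Charpoly

open Polynomial

lemma charpoly_eq_prod_of_eigenbasis {n ι K : Type*} [Fintype n] [DecidableEq n] [Fintype ι]
    [CommRing K] {A : Matrix n n K} (b : Module.Basis ι K (n → K)) {μ : ι → K}
    (hb : ∀ i, A *ᵥ b i = μ i • b i) : A.charpoly = ∏ i, (X - C (μ i)) := by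
  classical
  have hdiag : LinearMap.toMatrix b b A.toLin' = diagonal μ := by
    ext i j
    rcases eq_or_ne i j with rfl | h
    · simp [LinearMap.toMatrix_apply, hb]
    · simp [LinearMap.toMatrix_apply, hb, h]
  rw [← Matrix.charpoly_toLin', ← LinearMap.charpoly_toMatrix _ b, hdiag, charpoly_diagonal]

lemma charpoly_adjMatrix_top (V K : Type*) [Fintype V] [DecidableEq V] [Nonempty V] [CommRing K] :
    ((⊤ : SimpleGraph V).adjMatrix K).charpoly =
      (X + C 1) ^ (Fintype.card V - 1) * (X - C (Fintype.card V - 1 : K)) := by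
  have hA : (⊤ : SimpleGraph V).adjMatrix K = vecMulVec 1 1 - scalar V 1 := by
    ext i j
    by_cases h : i = j <;> simp [h]
  obtain ⟨m, hm⟩ := Nat.exists_eq_add_one_of_ne_zero (Fintype.card_ne_zero (α := V))
  rw [hA, charpoly_sub_scalar, charpoly_vecMulVec]
  simp only [hm, pow_succ, one_dotProduct_one, Nat.cast_add, Nat.cast_one, add_tsub_cancel_right,
    smul_eq_C_mul, map_add, map_natCast, map_one, sub_comp, mul_comp, pow_comp, X_comp, add_comp,
    natCast_comp, one_comp, add_sub_cancel_right]
  ring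

end Charpoly

section Energy

open Polynomial

variable {V W : Type*} [Fintype V] [DecidableEq V] [Fintype W] [DecidableEq W]

theorem graphEnergy_eq_sum_abs_eigenvalues (G : SimpleGraph V) [DecidableRel G.Adj] :
    graphEnergy G = ∑ i, |(adjMatrix_isHermitian G).eigenvalues i| := by
  unfold graphEnergy
  congr!

theorem graphEnergy_eq_sum_norm_roots (𝕜 : Type*) [RCLike 𝕜] (G : SimpleGraph V)
    [DecidableRel G.Adj] :
    graphEnergy G = ((G.adjMatrix 𝕜).charpoly.roots.map (‖·‖)).sum := by
  have hmap : G.adjMatrix 𝕜 = (G.adjMatrix ℝ).map (algebraMap ℝ 𝕜) := by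
    ext i j
    by_cases h : G.Adj i j <;> simp [h]
  rw [hmap, charpoly_map, (adjMatrix_isHermitian G).splits_charpoly.roots_map]
  simp [graphEnergy_eq_sum_abs_eigenvalues,
    (adjMatrix_isHermitian G).roots_charpoly_eq_eigenvalues]

theorem graphEnergy_eq_sum_norm_of_eigenbasis {𝕜 ι : Type*} [RCLike 𝕜] [Fintype ι]
    (G : SimpleGraph V) [DecidableRel G.Adj] (b : Module.Basis ι 𝕜 (V → 𝕜)) {μ : ι → 𝕜}
    (hb : ∀ i, G.adjMatrix 𝕜 *ᵥ b i = μ i • b i) : graphEnergy G = ∑ i, ‖μ i‖ := by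
  have hroots : (∏ i, (X - C (μ i))).roots = univ.val.map μ := by
    simpa using roots_multiset_prod_X_sub_C (univ.val.map μ)
  simp [graphEnergy_eq_sum_norm_roots 𝕜, charpoly_eq_prod_of_eigenbasis b hb, hroots]

theorem graphEnergy_congr {G : SimpleGraph V} {H : SimpleGraph W} (e : G ≃g H) :
    graphEnergy G = graphEnergy H := by
  classical
  rw [graphEnergy_eq_sum_norm_roots ℝ, graphEnergy_eq_sum_norm_roots ℝ, ← e.reindex_adjMatrix ℝ,
    charpoly_reindex]

theorem graphEnergy_sum (G : SimpleGraph V) (H : SimpleGraph W) :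
    graphEnergy (G ⊕g H) = graphEnergy G + graphEnergy H := by
  classical
  have hA : (G ⊕g H).adjMatrix ℝ = fromBlocks (G.adjMatrix ℝ) 0 0 (H.adjMatrix ℝ) := by
    ext (i | i) (j | j) <;> simp [adjMatrix_apply]
  have hne := mul_ne_zero (charpoly_monic (G.adjMatrix ℝ)).ne_zero
    (charpoly_monic (H.adjMatrix ℝ)).ne_zero
  simp only [graphEnergy_eq_sum_norm_roots ℝ, hA, charpoly_fromBlocks_zero₁₂, roots_mul hne,
    Multiset.map_add, Multiset.sum_add]

theorem graphEnergy_top [Nonempty V] :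
    graphEnergy (⊤ : SimpleGraph V) = 2 * (Fintype.card V - 1) := by
  have hcard : (0 : ℝ) ≤ Fintype.card V - 1 :=
    sub_nonneg.2 (mod_cast Fintype.card_pos (α := V))
  have hne := mul_ne_zero
    (pow_ne_zero (Fintype.card V - 1) (X_add_C_ne_zero (1 : ℝ)))
    (X_sub_C_ne_zero (Fintype.card V - 1 : ℝ))
  rw [graphEnergy_eq_sum_norm_roots ℝ, charpoly_adjMatrix_top, roots_mul hne, roots_pow,
    roots_X_add_C, roots_X_sub_C]
  simp only [Real.norm_eq_abs, Multiset.map_add, Multiset.map_nsmul, Multiset.map_singleton,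
    abs_neg, abs_one, abs_of_nonneg hcard, Multiset.sum_add, Multiset.sum_nsmul,
    Multiset.sum_singleton, nsmul_eq_mul, Nat.cast_pred Fintype.card_pos, mul_one]
  ring

end Energy

section LocalEnergy

variable {V W : Type*}

/-- An induced subgraph of a disjoint union is the disjoint union of the induced subgraphs on the
two sides. -/
def induceSumIso (G : SimpleGraph V) (H : SimpleGraph W) (s : Set (V ⊕ W)) :
    (G ⊕g H).induce s ≃g G.induce (Sum.inl ⁻¹' s) ⊕g H.induce (Sum.inr ⁻¹' s) where
  toEquiv := Equiv.subtypeSum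
  map_rel_iff' := by rintro ⟨_ | _, _⟩ ⟨_ | _, _⟩ <;> rfl

variable [DecidableEq V] [DecidableEq W]

lemma graphEnergy_induce_sum (G : SimpleGraph V) (H : SimpleGraph W) {s : Set (V ⊕ W)}
    {t : Set V} {u : Set W} [Fintype s] [Fintype t] [Fintype u]
    (ht : Sum.inl ⁻¹' s = t) (hu : Sum.inr ⁻¹' s = u) :
    graphEnergy ((G ⊕g H).induce s) = graphEnergy (G.induce t) + graphEnergy (H.induce u) := by
  subst ht hu
  rw [graphEnergy_congr (induceSumIso G H s), graphEnergy_sum]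

variable [Fintype V] [Fintype W]

lemma localEnergyAt_sum_inl (G : SimpleGraph V) (H : SimpleGraph W) (v : V) :
    localEnergyAt (G ⊕g H) (Sum.inl v) = localEnergyAt G v := by
  have hdel := graphEnergy_induce_sum G H (s := {x | x ≠ Sum.inl v}) (t := {x | x ≠ v})
    (u := Set.univ) (by ext; simp) (by ext; simp)
  rw [localEnergyAt, localEnergyAt, hdel, graphEnergy_sum, graphEnergy_congr H.induceUnivIso]
  ring

lemma localEnergyAt_sum_inr (G : SimpleGraph V) (H : SimpleGraph W) (w : W) :
    localEnergyAt (G ⊕g H) (Sum.inr w) = localEnergyAt H w := by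
  have hdel := graphEnergy_induce_sum G H (s := {x | x ≠ Sum.inr w}) (t := Set.univ)
    (u := {x | x ≠ w}) (by ext; simp) (by ext; simp)
  rw [localEnergyAt, localEnergyAt, hdel, graphEnergy_sum, graphEnergy_congr G.induceUnivIso]
  ring

theorem localEnergy_sum (G : SimpleGraph V) (H : SimpleGraph W) :
    localEnergy (G ⊕g H) = localEnergy G + localEnergy H := by
  simp only [localEnergy, Fintype.sum_sum_type, localEnergyAt_sum_inl, localEnergyAt_sum_inr]

theorem localEnergyAt_top [Nontrivial V] (v : V) : localEnergyAt (⊤ : SimpleGraph V) v = 2 := by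
  have hcard : (Fintype.card {u | u ≠ v} : ℝ) = Fintype.card V - 1 := by
    rw [Set.card_ne_eq, Nat.cast_pred Fintype.card_pos]
  have hne : Nonempty {u | u ≠ v} := Set.Nonempty.to_subtype (exists_ne v)
  have htop : (⊤ : SimpleGraph V).induce {u | u ≠ v} = ⊤ := induce_top _
  rw [localEnergyAt, htop, graphEnergy_top, graphEnergy_top, hcard]
  ring

theorem localEnergy_top [Nontrivial V] :
    localEnergy (⊤ : SimpleGraph V) = 2 * Fintype.card V := by
  simp [localEnergy, localEnergyAt_top, mul_comm]

end LocalEnergy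

section Cycle

open Real

/-- Deleting a vertex `v` from a cycle leaves a path, numbered from `v + 1` onwards around the
cycle. -/
def pathGraphIsoInduceCycleGraph {n : ℕ} (v : Fin (n + 1)) :
    pathGraph n ≃g (cycleGraph (n + 1)).induce {u | u ≠ v} where
  toEquiv := (finSuccAboveEquiv (Fin.last n)).trans <|
    (Equiv.addLeft (v + 1)).subtypeEquiv fun a => by
      have hv : v + 1 + Fin.last n = v := by
        rw [add_assoc, add_comm 1, Fin.last_add_one, add_zero]
      exact (add_right_inj (v + 1)).not.symm.trans (by rw [hv]; rfl)
  map_rel_iff' {i j} := by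
    obtain _ | n := n
    · exact i.elim0
    simp [pathGraph_adj, cycleGraph_adj, finSuccAboveEquiv_apply, sub_eq_iff_eq_add',
      Fin.ext_iff, or_comm, eq_comm]

theorem cycleGraph_adjMatrix_mulVec_apply {R : Type*} [NonAssocSemiring R] {n : ℕ}
    (f : Fin (n + 3) → R) (i : Fin (n + 3)) :
    ((cycleGraph (n + 3)).adjMatrix R *ᵥ f) i = f (i - 1) + f (i + 1) := by
  have h : i - 1 ≠ i + 1 := by
    rw [Ne, sub_eq_iff_eq_add, add_assoc, left_eq_add]
    simp [Fin.ext_iff, Fin.val_add, Nat.mod_eq_of_lt]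
  rw [adjMatrix_mulVec_apply, cycleGraph_neighborFinset, sum_pair h]

theorem pathGraph_adjMatrix_mulVec_apply {R : Type*} [NonAssocSemiring R] {n : ℕ}
    [DecidableRel (pathGraph n).Adj] {f : ℕ → R} (h0 : f 0 = 0) (hn : f (n + 1) = 0) (i : Fin n) :
    ((pathGraph n).adjMatrix R *ᵥ fun j => f (j + 1)) i = f i + f (i + 2) := by
  have hentry (j : Fin n) : (pathGraph n).adjMatrix R i j * f (j + 1) =
      (if (j : ℕ) + 1 = i then f (j + 1) else 0) + if (j : ℕ) = i + 1 then f (j + 1) else 0 := by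
    simp only [adjMatrix_apply, pathGraph_adj]
    split_ifs <;> first | lia | simp
  have hpred : ∑ j ∈ range n, (if j + 1 = (i : ℕ) then f (j + 1) else 0) = f i := by
    obtain ⟨_ | i, hi⟩ := i
    · simp [h0]
    · simpa using fun h => by lia
  have hsucc : ∑ j ∈ range n, (if j = (i : ℕ) + 1 then f (j + 1) else 0) = f (i + 2) := by
    rw [sum_ite_eq']
    rcases (Nat.succ_le_of_lt i.2).lt_or_eq with h | h
    · rw [if_pos (mem_range.2 h)]
    · rw [if_neg (by simp [← h]), show (i : ℕ) + 2 = n + 1 by lia, hn]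
  simp only [mulVec, dotProduct, hentry, sum_add_distrib]
  rw [Fin.sum_univ_eq_sum_range fun j => if j + 1 = (i : ℕ) then f (j + 1) else 0,
    Fin.sum_univ_eq_sum_range fun j => if j = (i : ℕ) + 1 then f (j + 1) else 0, hpred, hsucc]

theorem graphEnergy_cycleGraph_eq_sum_addChar (n : ℕ) :
    graphEnergy (cycleGraph (n + 3)) = ∑ ψ : AddChar (Fin (n + 3)) ℂ, ‖ψ (-1) + ψ 1‖ := by
  refine graphEnergy_eq_sum_norm_of_eigenbasis _ (AddChar.complexBasis (Fin (n + 3))) fun ψ => ?_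
  ext i
  rw [cycleGraph_adjMatrix_mulVec_apply, AddChar.complexBasis_apply, sub_eq_add_neg,
    ψ.map_add_eq_mul, ψ.map_add_eq_mul, Pi.smul_apply, smul_eq_mul]
  ring

lemma norm_zmodAddEquiv_neg_one_add_one {n : ℕ} [NeZero n] (j : ZMod n) :
    ‖AddChar.zmodAddEquiv j (-1) + AddChar.zmodAddEquiv j 1‖ = |2 * cos (2 * π * j.val / n)| := by
  have h : AddChar.zmodAddEquiv j 1 = Complex.exp ((2 * π * j.val / n : ℝ) * Complex.I) := by
    have hj := AddChar.zmod_intCast n j.val 1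
    rw [Int.cast_natCast, ZMod.natCast_zmod_val, Int.cast_one] at hj
    rw [AddChar.zmodAddEquiv_apply]
    change ((AddChar.zmod n j 1 : Circle) : ℂ) = _
    rw [hj, Circle.coe_exp]
    push_cast
    ring_nf
  rw [AddChar.map_neg_eq_conj, add_comm, Complex.add_conj, h, Complex.exp_ofReal_mul_I_re,
    Complex.norm_real, norm_eq_abs]

theorem graphEnergy_cycleGraph {n : ℕ} (hn : 3 ≤ n) :
    graphEnergy (cycleGraph n) = ∑ j ∈ range n, |2 * cos (2 * π * j / n)| := by
  obtain ⟨m, rfl⟩ := Nat.exists_eq_add_of_le' hn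
  calc graphEnergy (cycleGraph (m + 3))
    _ = ∑ ψ : AddChar (ZMod (m + 3)) ℂ, ‖ψ (-1) + ψ 1‖ := graphEnergy_cycleGraph_eq_sum_addChar m
    _ = ∑ j : ZMod (m + 3), |2 * cos (2 * π * j.val / (m + 3 : ℕ))| := by
      rw [← AddChar.zmodAddEquiv.toEquiv.sum_comp]
      exact sum_congr rfl fun j _ => norm_zmodAddEquiv_neg_one_add_one j
    _ = _ := Fin.sum_univ_eq_sum_range
      (fun j => |2 * cos (2 * π * j / (m + 3 : ℕ))|) (m + 3)

lemma pathGraph_adjMatrix_mulVec_sin {n : ℕ} [DecidableRel (pathGraph n).Adj] {θ : ℝ}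
    (hθ : sin ((n + 1) * θ) = 0) :
    (pathGraph n).adjMatrix ℝ *ᵥ (fun j => sin ((j + 1) * θ)) =
      (2 * cos θ) • fun j : Fin n => sin ((j + 1) * θ) := by
  ext i
  have h := pathGraph_adjMatrix_mulVec_apply (f := fun k : ℕ => sin (k * θ)) (by simp)
    (by simpa using hθ) i
  have hadd : (i * θ + (i + 2) * θ) / 2 = (i + 1) * θ := by ring
  have hsub : (i * θ - (i + 2) * θ) / 2 = -θ := by ring
  push_cast at h
  rw [h, Pi.smul_apply, smul_eq_mul, sin_add_sin, hadd, hsub, cos_neg]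
  ring

theorem graphEnergy_pathGraph (n : ℕ) :
    graphEnergy (pathGraph n) = ∑ j ∈ range n, |2 * cos (π * (j + 1) / (n + 1))| := by
  classical
  let θ (j : Fin n) : ℝ := π * (j + 1) / (n + 1)
  let v (j i : Fin n) : ℝ := sin ((i + 1) * θ j)
  have hmul (j : Fin n) : (n + 1) * θ j = (j + 1 : ℕ) * π := by
    simp only [θ]
    push_cast
    field_simp
  have hθ (j : Fin n) : θ j ∈ Set.Ioo 0 π := by
    have hj : (j + 1 : ℝ) < n + 1 := by exact_mod_cast Nat.succ_lt_succ j.2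
    refine ⟨by positivity, ?_⟩
    rw [div_lt_iff₀ (by positivity)]
    exact mul_lt_mul_of_pos_left hj pi_pos
  have hinj : Function.Injective fun j => 2 * cos (θ j) := fun i j hij => by
    have hθij : θ i = θ j := injOn_cos (Set.Ioo_subset_Icc_self (hθ i))
      (Set.Ioo_subset_Icc_self (hθ j)) (mul_left_cancel₀ two_ne_zero hij)
    have hmulij := (hmul i).symm.trans (hθij ▸ hmul j)
    exact Fin.ext (by simpa [pi_ne_zero] using hmulij)
  have heig (j : Fin n) : (pathGraph n).adjMatrix ℝ *ᵥ v j = (2 * cos (θ j)) • v j :=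
    pathGraph_adjMatrix_mulVec_sin (by rw [hmul, sin_nat_mul_pi])
  have hv (j : Fin n) : v j ≠ 0 := fun h =>
    (sin_pos_of_mem_Ioo (hθ j)).ne' (by simpa [v] using congrFun h ⟨0, j.pos⟩)
  have hli : LinearIndependent ℝ v :=
    Module.End.eigenvectors_linearIndependent' (toLin' ((pathGraph n).adjMatrix ℝ)) _ hinj v
      fun j => ⟨Module.End.mem_eigenspace_iff.2 (heig j), hv j⟩
  rw [graphEnergy_eq_sum_norm_of_eigenbasis _ (basisOfPiSpaceOfLinearIndependent hli)
    (by simpa using heig), ← Fin.sum_univ_eq_sum_range]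
  rfl

theorem graphEnergy_cycleGraph_of_odd {n : ℕ} (hn : 2 ≤ n) (hodd : Odd (n + 1)) :
    graphEnergy (cycleGraph (n + 1)) = graphEnergy (pathGraph n) + 2 := by
  let f (j : ℕ) : ℝ := |2 * cos (π * j / (n + 1 : ℕ))|
  have hf : Function.Periodic f (n + 1) := fun j => by
    have h : π * (j + (n + 1) : ℕ) / (n + 1 : ℕ) = π * j / (n + 1 : ℕ) + π := by
      push_cast
      field_simp
    simp only [f]
    rw [h, cos_add_pi, mul_neg, abs_neg]
  calc graphEnergy (cycleGraph (n + 1))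
    _ = ∑ j ∈ range (n + 1), f (2 * j) := by
      rw [graphEnergy_cycleGraph (by lia)]
      refine sum_congr rfl fun j _ => ?_
      simp only [f]
      push_cast
      ring_nf
    _ = ∑ j ∈ range (n + 1), f j := sum_range_mul_of_periodic hf hodd.coprime_two_left
    _ = graphEnergy (pathGraph n) + 2 := by
      rw [sum_range_succ', graphEnergy_pathGraph]
      simp [f]

theorem localEnergyAt_cycleGraph_of_odd {n : ℕ} (hn : 3 ≤ n) (hodd : Odd n) (v : Fin n) :
    localEnergyAt (cycleGraph n) v = 2 := by
  obtain ⟨m, rfl⟩ := Nat.exists_eq_add_of_le' (Nat.one_le_of_lt hn)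
  rw [localEnergyAt, ← graphEnergy_congr (pathGraphIsoInduceCycleGraph v),
    graphEnergy_cycleGraph_of_odd (by lia) hodd, add_sub_cancel_left]

theorem localEnergy_cycleGraph_of_odd {n : ℕ} (hn : 3 ≤ n) (hodd : Odd n) :
    localEnergy (cycleGraph n) = 2 * n := by
  simp [localEnergy, localEnergyAt_cycleGraph_of_odd hn hodd, mul_comm]

end Cycle

/-- `e(K₇) = e(K₅ ∪ K₂) = e(K₄ ∪ K₃) = e(K₃ ∪ K₂ ∪ K₂) = e(C₇) = e(C₅ ∪ K₂)`. -/
theorem localEnergy_K7_eq :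
    localEnergy (⊤ : SimpleGraph (Fin 7)) =
      localEnergy ((⊤ : SimpleGraph (Fin 5)) ⊕g (⊤ : SimpleGraph (Fin 2))) ∧
    localEnergy ((⊤ : SimpleGraph (Fin 5)) ⊕g (⊤ : SimpleGraph (Fin 2))) =
      localEnergy ((⊤ : SimpleGraph (Fin 4)) ⊕g (⊤ : SimpleGraph (Fin 3))) ∧
    localEnergy ((⊤ : SimpleGraph (Fin 4)) ⊕g (⊤ : SimpleGraph (Fin 3))) =
      localEnergy (((⊤ : SimpleGraph (Fin 3)) ⊕g (⊤ : SimpleGraph (Fin 2)))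
        ⊕g (⊤ : SimpleGraph (Fin 2))) ∧
    localEnergy (((⊤ : SimpleGraph (Fin 3)) ⊕g (⊤ : SimpleGraph (Fin 2)))
        ⊕g (⊤ : SimpleGraph (Fin 2))) =
      localEnergy (cycleGraph 7) ∧
    localEnergy (cycleGraph 7) =
      localEnergy (cycleGraph 5 ⊕g (⊤ : SimpleGraph (Fin 2))) := by
  simp only [localEnergy_sum, localEnergy_top, Fintype.card_fin,
    localEnergy_cycleGraph_of_odd (n := 5) (by norm_num) (by decide),
    localEnergy_cycleGraph_of_odd (n := 7) (by norm_num) (by decide)]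
  norm_num
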